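/- Let f : ℝ² → ℝ be a homogeneous polynomial. For (x,y) ∈ ℝ² set W = √(1 + f_x² + f_y²), d = 1 − √((W−1)/(W+1)) > 0, and Δ² = [((1+f_y²)·f_xx − 2·f_x·f_y·f_xy + (1+f_x²)·f_yy)² − 4·(1+f_x²+f_y²)·(f_xx·f_yy − f_xy²)] / (1+f_x²+f_y²)³, which equals the square (κ₁ − κ₂)² of the difference of the principal curvatures of the graph z = f(x,y) at (x,y). Then the infimum over all (x,y) ∈ ℝ² of Δ²/d² is equal to 0. -/

import Mathlib

open MvPolynomial Real Filter

/-- Evaluate a bivariate polynomial at `(x, y)`. -/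
noncomputable def ev (p : MvPolynomial (Fin 2) ℝ) (x y : ℝ) : ℝ :=
  eval ![x, y] p

/-- Formal partial derivative in the first variable. -/
noncomputable def Dx (p : MvPolynomial (Fin 2) ℝ) : MvPolynomial (Fin 2) ℝ :=
  pderiv (0 : Fin 2) p

/-- Formal partial derivative in the second variable. -/
noncomputable def Dy (p : MvPolynomial (Fin 2) ℝ) : MvPolynomial (Fin 2) ℝ :=
  pderiv (1 : Fin 2) p

/-- The square `(κ₁ − κ₂)²` of the difference of the principal curvatures of the
graph `z = f(x,y)` at `(x,y)`, for `f` the polynomial function determined by `p`. -/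
noncomputable def Delta2 (p : MvPolynomial (Fin 2) ℝ) (x y : ℝ) : ℝ :=
  (((1 + ev (Dy p) x y ^ 2) * ev (Dx (Dx p)) x y
      - 2 * ev (Dx p) x y * ev (Dy p) x y * ev (Dy (Dx p)) x y
      + (1 + ev (Dx p) x y ^ 2) * ev (Dy (Dy p)) x y) ^ 2
    - 4 * (1 + ev (Dx p) x y ^ 2 + ev (Dy p) x y ^ 2)
        * (ev (Dx (Dx p)) x y * ev (Dy (Dy p)) x y - ev (Dy (Dx p)) x y ^ 2))
  / (1 + ev (Dx p) x y ^ 2 + ev (Dy p) x y ^ 2) ^ 3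

/-- `W = √(1 + f_x² + f_y²)`. -/
noncomputable def Wgr (p : MvPolynomial (Fin 2) ℝ) (x y : ℝ) : ℝ :=
  Real.sqrt (1 + ev (Dx p) x y ^ 2 + ev (Dy p) x y ^ 2)

/-- The distance to infinity `d = 1 − √((W−1)/(W+1)) = 1 − |ξ|` of the point `(x,y)`
under the Gauss map of the graph `z = f(x,y)`. -/
noncomputable def dInf (p : MvPolynomial (Fin 2) ℝ) (x y : ℝ) : ℝ :=
  1 - Real.sqrt ((Wgr p x y - 1) / (Wgr p x y + 1))

/-!
For `n ≠ 2` the Hessian vanishes at the origin, which is therefore an umbilic. For `n = 2` the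
Hessian `H` is constant and the gradient is `z ↦ H z`. Since `1 / d` is at most `2 W`, it suffices
to make `W² (κ₁ − κ₂)²` small.

* If `det H > 0`, the graph has an umbilic: this means `H = m (1 + g gᵀ)` with `g = H z`, and taking
  for `m` the eigenvalue of smaller absolute value makes `H / m - 1` positive semidefinite of rank
  at most one, hence of the form `g gᵀ`.
* If `det H ≤ 0` and `H ≠ 0`, there is a direction `z` with `H z ≠ 0` and `det H · zᵀ H z = 0`.
  Along it the numerator of the mean curvature, `tr H + det H · zᵀ H z`, is constant, so
  `W² (κ₁ − κ₂)² → 0` at infinity.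
-/

section Polynomial

variable {σ R : Type*} [CommSemiring R] {p : MvPolynomial σ R} {n : ℕ}

theorem pderiv_pderiv_comm (i j : σ) (p : MvPolynomial σ R) :
    pderiv i (pderiv j p) = pderiv j (pderiv i p) := by
  rcases eq_or_ne i j with rfl | hij
  · rfl
  · ext d
    simp only [coeff_pderiv, Finsupp.add_apply, Finsupp.single_eq_of_ne hij,
      Finsupp.single_eq_of_ne hij.symm, add_zero]
    rw [add_right_comm, mul_right_comm]

theorem eq_C_constantCoeff_of_isHomogeneous_zero (hp : p.IsHomogeneous 0) :
    p = C (constantCoeff p) :=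
  totalDegree_eq_zero_iff_eq_C.1 ((totalDegree_zero_iff_isHomogeneous _).2 hp)

theorem eval_eq_constantCoeff_of_isHomogeneous_zero (hp : p.IsHomogeneous 0) (z : σ → R) :
    eval z p = constantCoeff p := by
  rw [eq_C_constantCoeff_of_isHomogeneous_zero hp, eval_C, constantCoeff_C]

theorem eval_eq_sum_constantCoeff_pderiv_of_isHomogeneous_one [Fintype σ]
    (hp : p.IsHomogeneous 1) (z : σ → R) :
    eval z p = ∑ i, z i * constantCoeff (pderiv i p) := by
  have euler := congrArg (eval z) hp.sum_X_mul_pderiv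
  rw [one_smul, map_sum] at euler
  rw [← euler]
  refine Finset.sum_congr rfl fun i _ => ?_
  rw [map_mul, eval_X, eval_eq_constantCoeff_of_isHomogeneous_zero hp.pderiv]

theorem constantCoeff_pderiv_pderiv_eq_zero (hp : p.IsHomogeneous n) (hn : n ≠ 2) (i j : σ) :
    constantCoeff (pderiv i (pderiv j p)) = 0 := by
  have hcoeff : coeff (0 + Finsupp.single i 1 + Finsupp.single j 1) p = 0 :=
    hp.coeff_eq_zero (by simpa using hn.symm)
  rw [constantCoeff_eq, coeff_pderiv, coeff_pderiv, hcoeff, zero_mul, zero_mul]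

end Polynomial

section UmbilicDiscr

variable (a b c u v : ℝ)

/-- The numerator `W⁶ (κ₁ − κ₂)²` of the squared difference of the principal curvatures of a graph
with Hessian `!![a, b; b, c]` and gradient `(u, v)` at some point, where `W² = 1 + u² + v²`; it
vanishes exactly at umbilics. -/
def umbilicDiscr : ℝ :=
  ((1 + v ^ 2) * a - 2 * u * v * b + (1 + u ^ 2) * c) ^ 2
    - 4 * (1 + u ^ 2 + v ^ 2) * (a * c - b ^ 2)

theorem umbilicDiscr_nonneg : 0 ≤ umbilicDiscr a b c u v := by
  have sum_of_squares : (1 + u ^ 2) ^ 2 * umbilicDiscr a b c u v =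
      4 * (1 + u ^ 2 + v ^ 2) * ((1 + u ^ 2) * b - u * v * a) ^ 2
      + ((1 + u ^ 2) * ((1 + u ^ 2) * c - (1 + v ^ 2) * a)
        - 2 * (u * v) * ((1 + u ^ 2) * b - u * v * a)) ^ 2 := by
    unfold umbilicDiscr; ring
  refine (mul_nonneg_iff_of_pos_left (show 0 < (1 + u ^ 2) ^ 2 by positivity)).1 ?_
  rw [sum_of_squares]
  positivity

theorem umbilicDiscr_zero_hessian : umbilicDiscr 0 0 0 u v = 0 := by
  unfold umbilicDiscr; ring

theorem umbilicDiscr_of_hessian_proportional (m : ℝ) :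
    umbilicDiscr (m * (1 + u ^ 2)) (m * (u * v)) (m * (1 + v ^ 2)) u v = 0 := by
  unfold umbilicDiscr; ring

theorem umbilicDiscr_quadratic_form (x y : ℝ) :
    umbilicDiscr a b c (a * x + b * y) (b * x + c * y) =
      (a + c + (a * c - b ^ 2) * (a * x ^ 2 + 2 * b * x * y + c * y ^ 2)) ^ 2
        - 4 * (1 + (a * x + b * y) ^ 2 + (b * x + c * y) ^ 2) * (a * c - b ^ 2) := by
  unfold umbilicDiscr; ring

end UmbilicDiscr

section QuadraticForm

variable {a b c : ℝ}

theorem exists_rank_one_decomposition (htrace : 0 ≤ a + c) (hdet : a * c = b ^ 2) :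
    ∃ u v : ℝ, u ^ 2 = a ∧ u * v = b ∧ v ^ 2 = c := by
  have ha : 0 ≤ a := by nlinarith [sq_nonneg b]
  have hc : 0 ≤ c := by nlinarith [sq_nonneg b]
  have hsqrt : √a * √c = |b| := by rw [← Real.sqrt_mul ha, hdet, Real.sqrt_sq_eq_abs]
  rcases abs_choice b with hb | hb
  · exact ⟨√a, √c, Real.sq_sqrt ha, hsqrt.trans hb, Real.sq_sqrt hc⟩
  · refine ⟨√a, -√c, Real.sq_sqrt ha, ?_, by rw [neg_sq, Real.sq_sqrt hc]⟩
    rw [mul_neg, hsqrt, hb, neg_neg]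

theorem exists_eigenvalue_sq_le_det (hdet : 0 < a * c - b ^ 2) :
    ∃ m : ℝ, (a - m) * (c - m) = b ^ 2 ∧ m ^ 2 ≤ a * c - b ^ 2 := by
  have hdiscr : discrim 1 (-(a + c)) (a * c - b ^ 2) =
      √((a - c) ^ 2 + 4 * b ^ 2) * √((a - c) ^ 2 + 4 * b ^ 2) := by
    rw [Real.mul_self_sqrt (by positivity), discrim]
    ring
  obtain ⟨m, hm⟩ := exists_quadratic_eq_zero one_ne_zero ⟨_, hdiscr⟩
  rcases le_total (m ^ 2) (a * c - b ^ 2) with hle | hge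
  · exact ⟨m, by linear_combination hm, hle⟩
  · -- The product of the two roots is the determinant.
    refine ⟨a + c - m, by linear_combination hm, le_of_mul_le_mul_right ?_ hdet⟩
    calc (a + c - m) ^ 2 * (a * c - b ^ 2)
        ≤ (a + c - m) ^ 2 * m ^ 2 := by gcongr
      _ = ((a + c - m) * m) ^ 2 := by ring
      _ = (a * c - b ^ 2) * (a * c - b ^ 2) := by
        rw [show (a + c - m) * m = a * c - b ^ 2 by linear_combination -hm, sq]

theorem exists_gradient_eq (hdet : a * c - b ^ 2 ≠ 0) (u v : ℝ) :
    ∃ x y : ℝ, a * x + b * y = u ∧ b * x + c * y = v := by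
  refine ⟨(c * u - b * v) / (a * c - b ^ 2), (a * v - b * u) / (a * c - b ^ 2), ?_, ?_⟩ <;>
    rw [mul_div_assoc', mul_div_assoc', ← add_div, div_eq_iff hdet] <;> ring

theorem exists_umbilic_of_det_pos (hdet : 0 < a * c - b ^ 2) :
    ∃ x y : ℝ, umbilicDiscr a b c (a * x + b * y) (b * x + c * y) = 0 := by
  obtain ⟨m, hchar, hle⟩ := exists_eigenvalue_sq_le_det hdet
  have hm : m ≠ 0 := by
    rintro rfl
    linarith
  have htrace : 0 ≤ (a / m - 1) + (c / m - 1) := by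
    have heq : (a / m - 1) + (c / m - 1) = (a * c - b ^ 2 - m ^ 2) / m ^ 2 := by
      field_simp
      linear_combination -hchar
    rw [heq]
    exact div_nonneg (sub_nonneg.2 hle) (sq_nonneg m)
  have hsing : (a / m - 1) * (c / m - 1) = (b / m) ^ 2 := by
    field_simp
    exact hchar
  obtain ⟨u, v, hu, huv, hv⟩ := exists_rank_one_decomposition htrace hsing
  have ha : m * (1 + u ^ 2) = a := by rw [hu]; field_simp; ring
  have hb : m * (u * v) = b := by rw [huv]; field_simp
  have hc : m * (1 + v ^ 2) = c := by rw [hv]; field_simp; ring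
  obtain ⟨x, y, hx, hy⟩ := exists_gradient_eq hdet.ne' u v
  refine ⟨x, y, ?_⟩
  rw [hx, hy, ← ha, ← hb, ← hc]
  exact umbilicDiscr_of_hessian_proportional u v m

theorem exists_isotropic_of_det_neg (hdet : a * c - b ^ 2 < 0) :
    ∃ x y : ℝ, a * x ^ 2 + 2 * b * x * y + c * y ^ 2 = 0 ∧ (x ≠ 0 ∨ y ≠ 0) := by
  rcases eq_or_ne a 0 with rfl | ha
  · exact ⟨1, 0, by ring, Or.inl one_ne_zero⟩
  · have hdiscr : discrim a (2 * b) c =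
        (2 * √(b ^ 2 - a * c)) * (2 * √(b ^ 2 - a * c)) := by
      rw [mul_mul_mul_comm, Real.mul_self_sqrt (by linarith), discrim]
      ring
    obtain ⟨x, hx⟩ := exists_quadratic_eq_zero ha ⟨_, hdiscr⟩
    exact ⟨x, 1, by linear_combination hx, Or.inr one_ne_zero⟩

theorem exists_det_mul_form_eq_zero (hdet : a * c - b ^ 2 ≤ 0) (hne : a ≠ 0 ∨ b ≠ 0 ∨ c ≠ 0) :
    ∃ x y : ℝ, (a * c - b ^ 2) * (a * x ^ 2 + 2 * b * x * y + c * y ^ 2) = 0 ∧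
      (a * x + b * y ≠ 0 ∨ b * x + c * y ≠ 0) := by
  rcases hdet.lt_or_eq with hneg | hzero
  · obtain ⟨x, y, hform, hxy⟩ := exists_isotropic_of_det_neg hneg
    refine ⟨x, y, by rw [hform, mul_zero], ?_⟩
    by_contra! hgrad
    have hx : (a * c - b ^ 2) * x = 0 := by linear_combination c * hgrad.1 - b * hgrad.2
    have hy : (a * c - b ^ 2) * y = 0 := by linear_combination a * hgrad.2 - b * hgrad.1
    simp only [mul_eq_zero, hneg.ne, false_or] at hx hy
    exact hxy.elim (· hx) (· hy)
  · rcases hne with ha | hb | hc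
    · exact ⟨1, 0, by rw [hzero, zero_mul], Or.inl (by simpa using ha)⟩
    · exact ⟨1, 0, by rw [hzero, zero_mul], Or.inr (by simpa using hb)⟩
    · exact ⟨0, 1, by rw [hzero, zero_mul], Or.inr (by simpa using hc)⟩

theorem exists_umbilicDiscr_le_of_det_nonpos (hdet : a * c - b ^ 2 ≤ 0)
    (hne : a ≠ 0 ∨ b ≠ 0 ∨ c ≠ 0) {ε : ℝ} (hε : 0 < ε) :
    ∃ x y : ℝ, umbilicDiscr a b c (a * x + b * y) (b * x + c * y) ≤
      ε * (1 + (a * x + b * y) ^ 2 + (b * x + c * y) ^ 2) ^ 2 := by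
  obtain ⟨x, y, hform, hgrad⟩ := exists_det_mul_form_eq_zero hdet hne
  set r := (a * x + b * y) ^ 2 + (b * x + c * y) ^ 2
  have hr : 0 < r := by
    rcases hgrad with hu | hv <;> positivity
  set k := (a + c) ^ 2 - 4 * (a * c - b ^ 2)
  have hk0 : 0 ≤ k := by nlinarith [sq_nonneg (a + c)]
  set t := √(k / (ε * r))
  have ht : ε * (t ^ 2 * r) = k := by
    rw [Real.sq_sqrt (by positivity)]
    field_simp
  have hnorm : 1 + (a * (t * x) + b * (t * y)) ^ 2 + (b * (t * x) + c * (t * y)) ^ 2 =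
      1 + t ^ 2 * r := by ring
  have htrace : a + c + (a * c - b ^ 2) *
      (a * (t * x) ^ 2 + 2 * b * (t * x) * (t * y) + c * (t * y) ^ 2) = a + c := by
    linear_combination t ^ 2 * hform
  have hone : 1 ≤ 1 + t ^ 2 * r := by
    have : 0 ≤ t ^ 2 * r := by positivity
    linarith
  refine ⟨t * x, t * y, ?_⟩
  rw [umbilicDiscr_quadratic_form, htrace, hnorm]
  calc (a + c) ^ 2 - 4 * (1 + t ^ 2 * r) * (a * c - b ^ 2)
      ≤ k * (1 + t ^ 2 * r) := by nlinarith [mul_le_mul_of_nonneg_left hone (sq_nonneg (a + c))]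
    _ ≤ ε * (1 + t ^ 2 * r) ^ 2 := by
      rw [sq (1 + t ^ 2 * r), ← mul_assoc]
      gcongr
      linarith

theorem exists_umbilicDiscr_le (a b c : ℝ) {ε : ℝ} (hε : 0 < ε) :
    ∃ x y : ℝ, umbilicDiscr a b c (a * x + b * y) (b * x + c * y) ≤
      ε * (1 + (a * x + b * y) ^ 2 + (b * x + c * y) ^ 2) ^ 2 := by
  by_cases hne : a ≠ 0 ∨ b ≠ 0 ∨ c ≠ 0
  · rcases lt_or_ge 0 (a * c - b ^ 2) with hpos | hnonpos
    · obtain ⟨x, y, hxy⟩ := exists_umbilic_of_det_pos hpos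
      exact ⟨x, y, hxy.trans_le (by positivity)⟩
    · exact exists_umbilicDiscr_le_of_det_nonpos hnonpos hne hε
  · push Not at hne
    obtain ⟨rfl, rfl, rfl⟩ := hne
    exact ⟨0, 0, (umbilicDiscr_zero_hessian _ _).trans_le (by positivity)⟩

end QuadraticForm

theorem one_div_two_mul_le_one_sub_sqrt {w : ℝ} (hw : 1 ≤ w) :
    1 / (2 * w) ≤ 1 - √((w - 1) / (w + 1)) := by
  have hw1 : 0 < w + 1 := by linarith
  have hfrac : (w - 1) / (w + 1) = 1 + -(2 / (w + 1)) := by field_simp; ring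
  have hbound : 2 / (w + 1) ≤ 1 := (div_le_one hw1).2 (by linarith)
  calc 1 / (2 * w)
      ≤ 1 / (w + 1) := one_div_le_one_div_of_le hw1 (by linarith)
    _ = 1 - (1 + -(2 / (w + 1)) / 2) := by ring
    _ ≤ 1 - √((w - 1) / (w + 1)) := by
      rw [hfrac]
      exact sub_le_sub_left (Real.sqrt_one_add_le (neg_le_neg hbound)) 1

section Graph

/-- The numerator `W⁶ (κ₁ − κ₂)²` for the graph of `p` at `(x, y)`. -/
noncomputable def graphUmbilicDiscr (p : MvPolynomial (Fin 2) ℝ) (x y : ℝ) : ℝ :=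
  umbilicDiscr (ev (Dx (Dx p)) x y) (ev (Dy (Dx p)) x y) (ev (Dy (Dy p)) x y)
    (ev (Dx p) x y) (ev (Dy p) x y)

variable (p : MvPolynomial (Fin 2) ℝ) (x y : ℝ)

theorem Wgr_sq : Wgr p x y ^ 2 = 1 + ev (Dx p) x y ^ 2 + ev (Dy p) x y ^ 2 :=
  Real.sq_sqrt (by positivity)

theorem one_le_Wgr : 1 ≤ Wgr p x y :=
  Real.one_le_sqrt.2 <| by
    rw [add_assoc]
    exact le_add_of_nonneg_right (by positivity)

theorem Delta2_eq : Delta2 p x y = graphUmbilicDiscr p x y / Wgr p x y ^ 6 := by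
  rw [show Wgr p x y ^ 6 = (Wgr p x y ^ 2) ^ 3 by ring, Wgr_sq]
  rfl

theorem Delta2_nonneg : 0 ≤ Delta2 p x y := by
  rw [Delta2_eq]
  exact div_nonneg (umbilicDiscr_nonneg ..) (by positivity [one_le_Wgr p x y])

theorem Delta2_div_dInf_sq_le :
    Delta2 p x y / dInf p x y ^ 2 ≤ 4 * graphUmbilicDiscr p x y / Wgr p x y ^ 4 := by
  have hW : 0 < Wgr p x y := one_pos.trans_le (one_le_Wgr p x y)
  have hd : 1 / (2 * Wgr p x y) ≤ dInf p x y := one_div_two_mul_le_one_sub_sqrt (one_le_Wgr p x y)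
  calc Delta2 p x y / dInf p x y ^ 2
      ≤ Delta2 p x y / (1 / (2 * Wgr p x y)) ^ 2 := by
        gcongr
        exact Delta2_nonneg p x y
    _ = 4 * graphUmbilicDiscr p x y / Wgr p x y ^ 4 := by
        rw [Delta2_eq]
        field_simp
        ring

variable {p} {n : ℕ}

theorem graphUmbilicDiscr_zero_of_isHomogeneous (hp : p.IsHomogeneous n) (hn : n ≠ 2) :
    graphUmbilicDiscr p 0 0 = 0 := by
  have hessian_zero (i j : Fin 2) : ev (pderiv i (pderiv j p)) 0 0 = 0 := by
    rw [ev, show ![(0 : ℝ), 0] = 0 by simp, eval_zero]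
    exact constantCoeff_pderiv_pderiv_eq_zero hp hn i j
  simp only [graphUmbilicDiscr, Dx, Dy, hessian_zero, umbilicDiscr_zero_hessian]

theorem exists_graphUmbilicDiscr_le_of_isHomogeneous_two (hp : p.IsHomogeneous 2)
    {ε : ℝ} (hε : 0 < ε) : ∃ x y, graphUmbilicDiscr p x y ≤ ε * Wgr p x y ^ 4 := by
  have hessian (i j : Fin 2) (x y : ℝ) :
      ev (pderiv i (pderiv j p)) x y = constantCoeff (pderiv i (pderiv j p)) :=
    eval_eq_constantCoeff_of_isHomogeneous_zero hp.pderiv.pderiv _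
  have gradient (j : Fin 2) (x y : ℝ) :
      ev (pderiv j p) x y = constantCoeff (pderiv 0 (pderiv j p)) * x
        + constantCoeff (pderiv 1 (pderiv j p)) * y := by
    simp [ev, eval_eq_sum_constantCoeff_pderiv_of_isHomogeneous_one hp.pderiv, mul_comm]
  obtain ⟨x, y, hxy⟩ := exists_umbilicDiscr_le (constantCoeff (pderiv 0 (pderiv 0 p)))
    (constantCoeff (pderiv 1 (pderiv 0 p))) (constantCoeff (pderiv 1 (pderiv 1 p))) hε
  refine ⟨x, y, ?_⟩
  rw [show Wgr p x y ^ 4 = (Wgr p x y ^ 2) ^ 2 by ring, Wgr_sq]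
  simpa only [graphUmbilicDiscr, Dx, Dy, hessian, gradient, pderiv_pderiv_comm 0 1 p] using hxy

theorem exists_graphUmbilicDiscr_le (hp : p.IsHomogeneous n) {ε : ℝ} (hε : 0 < ε) :
    ∃ x y, graphUmbilicDiscr p x y ≤ ε * Wgr p x y ^ 4 := by
  rcases eq_or_ne n 2 with rfl | hn
  · exact exists_graphUmbilicDiscr_le_of_isHomogeneous_two hp hε
  · exact ⟨0, 0, (graphUmbilicDiscr_zero_of_isHomogeneous hp hn).trans_le (by positivity)⟩

end Graph

/-- For a homogeneous polynomial graph, the infimum over the plane of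
`(κ₁ − κ₂)²/d²` is zero, where `d` is the distance to infinity. -/
theorem inf_curvature_diff_over_dist_eq_zero (p : MvPolynomial (Fin 2) ℝ) (n : ℕ)
    (hp : p.IsHomogeneous n) :
    ⨅ q : ℝ × ℝ, Delta2 p q.1 q.2 / (dInf p q.1 q.2) ^ 2 = 0 := by
  have hnonneg (q : ℝ × ℝ) : 0 ≤ Delta2 p q.1 q.2 / (dInf p q.1 q.2) ^ 2 :=
    div_nonneg (Delta2_nonneg p q.1 q.2) (sq_nonneg _)
  refine le_antisymm (le_of_forall_pos_le_add fun ε hε => ?_) (Real.iInf_nonneg hnonneg)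
  obtain ⟨x, y, hxy⟩ := exists_graphUmbilicDiscr_le hp (ε := ε / 4) (by positivity)
  have hW : 0 < Wgr p x y := one_pos.trans_le (one_le_Wgr p x y)
  calc ⨅ q : ℝ × ℝ, Delta2 p q.1 q.2 / (dInf p q.1 q.2) ^ 2
      ≤ Delta2 p x y / dInf p x y ^ 2 := ciInf_le ⟨0, Set.forall_mem_range.2 hnonneg⟩ (x, y)
    _ ≤ 4 * graphUmbilicDiscr p x y / Wgr p x y ^ 4 := Delta2_div_dInf_sq_le p x y
    _ ≤ 4 * (ε / 4 * Wgr p x y ^ 4) / Wgr p x y ^ 4 := by gcongr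
    _ = 0 + ε := by field_simp; ring
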